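/- There exists C > 0 such that for every k ∈ {1,2}, every z ∈ K, every ζ' = (σ, ξ') ∈ ℝ × ℝ^n and every t̂' = (t̂_σ, t̂_{ξ'}) ∈ ℝ × ℝ^n: if m̂_k(z,ζ',t̂) = 0 (i.e. the quadratic X ↦ (X + i t̂_{ξd})² + m̂_k has a double root), then |t̂'|/C ≤ |ζ'| ≤ C |t̂'|. -/

import Mathlib

/-- `m̂_k(z,ζ',t̂) = (-1)^k i (σ + i t̂_σ)² + r_z(ξ' + i t̂_{ξ'})`, where `r_z` is the
complex-bilinear extension of the quadratic form with coefficient matrix `R`. -/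
noncomputable def mhat {n : ℕ} (R : Fin n → Fin n → ℝ) (k : ℕ)
    (σ : ℝ) (ξ : Fin n → ℝ) (tσ : ℝ) (tξ : Fin n → ℝ) : ℂ :=
  (-1 : ℂ) ^ k * Complex.I * ((σ : ℂ) + Complex.I * (tσ : ℂ)) ^ 2 +
    ∑ j, ∑ l, (R j l : ℂ) * ((ξ j : ℂ) + Complex.I * (tξ j : ℂ)) *
      ((ξ l : ℂ) + Complex.I * (tξ l : ℂ))

/-- `μ̂_k = 4 t̂_{ξd}² Re m̂_k − 4 t̂_{ξd}⁴ + (Im m̂_k)²`. -/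
noncomputable def muhat {n : ℕ} (R : Fin n → Fin n → ℝ) (k : ℕ)
    (σ : ℝ) (ξ : Fin n → ℝ) (tσ : ℝ) (tξ : Fin n → ℝ) (tξd : ℝ) : ℝ :=
  4 * tξd ^ 2 * (mhat R k σ ξ tσ tξ).re - 4 * tξd ^ 4 + (mhat R k σ ξ tσ tξ).im ^ 2

/-!
Write `ε = (-1)^k`. At a zero of `m̂_k` the real and imaginary parts give
`r(ξ) - r(t_ξ) = 2 ε σ t_σ` and `2 r̃(ξ, t_ξ) = ε (t_σ² - σ²)`. Inserting these into
`0 ≤ r(ξ + 2 ε t_ξ)` yields `r(ξ) + σ² ≤ 6 (r(t_ξ) + t_σ²)`, and uniform ellipticity together with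
compactness turns this into `|ζ'| ≤ C |t'|`. The reverse inequality is the same statement for
`k + 1`, because `m̂_{k+1}` at the exchanged pair `(t', ζ')` is minus the conjugate of `m̂_k` at
`(ζ', t')`.
-/

open QuadraticMap ComplexConjugate

theorem add_sq_le_six_mul_add_sq {A V : Type*} [CommRing A] [LinearOrder A] [IsStrictOrderedRing A]
    [AddCommGroup V] [Module A V] (q : QuadraticForm A V) (hq : ∀ v, 0 ≤ q v) {x y : V}
    {ε s t : A} (hε : ε ^ 2 = 1) (hsub : q x - q y = 2 * ε * s * t)
    (hpolar : polar q x y = ε * (t ^ 2 - s ^ 2)) :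
    q x + s ^ 2 ≤ 6 * (q y + t ^ 2) := by
  have hexpand : q (x + (2 * ε) • y) = q x + 4 * q y + 2 * (t ^ 2 - s ^ 2) := by
    rw [QuadraticMap.map_add q, polar_smul_right, QuadraticMap.map_smul, hpolar, smul_eq_mul,
      smul_eq_mul]
    linear_combination (4 * q y + 2 * (t ^ 2 - s ^ 2)) * hε
  have hnonneg : 0 ≤ q x + 4 * q y + 2 * (t ^ 2 - s ^ 2) := hexpand ▸ hq _
  have hsquare : 0 ≤ s ^ 2 - 4 * ε * s * t + 4 * t ^ 2 := by
    calc 0 ≤ (s - 2 * ε * t) ^ 2 := sq_nonneg _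
      _ = s ^ 2 - 4 * ε * s * t + 4 * t ^ 2 := by linear_combination 4 * t ^ 2 * hε
  linarith

theorem abs_mul_le_sum_sq {ι A : Type*} [Fintype ι] [CommRing A] [LinearOrder A]
    [IsStrictOrderedRing A] (η : ι → A) (j l : ι) : |η j * η l| ≤ ∑ i, η i ^ 2 := by
  have hsq (i : ι) : η i ^ 2 ≤ ∑ i, η i ^ 2 :=
    Finset.single_le_sum (fun i _ => sq_nonneg (η i)) (Finset.mem_univ i)
  rw [abs_mul]
  linarith [hsq j, hsq l, two_mul_le_add_sq |η j| |η l|, sq_abs (η j), sq_abs (η l)]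

section CoeffForm

variable {ι : Type*} [Fintype ι] [DecidableEq ι] {A : Type*} [CommRing A]

/-- The quadratic form `η ↦ ∑ R j l η_j η_l` with coefficients `R`, which need not be
symmetric; its polar form is twice the bilinear form `r̃` of the symmetrized coefficients. -/
noncomputable def coeffForm (R : ι → ι → A) : QuadraticForm A (ι → A) :=
  (Matrix.of R).toQuadraticForm'

theorem coeffForm_apply (R : ι → ι → A) (η : ι → A) :
    coeffForm R η = ∑ j, ∑ l, R j l * η j * η l := by
  rw [coeffForm, Matrix.toQuadraticForm', LinearMap.BilinMap.toQuadraticMap_apply,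
    Matrix.toLinearMap₂'_apply]
  refine Finset.sum_congr rfl fun j _ => Finset.sum_congr rfl fun l _ => ?_
  rw [smul_eq_mul, smul_eq_mul, Matrix.of_apply]
  ring

theorem polar_coeffForm (R : ι → ι → A) (x y : ι → A) :
    polar (coeffForm R) x y = ∑ j, ∑ l, R j l * (x j * y l + y j * x l) := by
  simp only [polar, coeffForm_apply, ← Finset.sum_sub_distrib, Pi.add_apply]
  exact Finset.sum_congr rfl fun j _ => Finset.sum_congr rfl fun l _ => by ring

theorem coeffForm_le_sum_abs_mul [LinearOrder A] [IsStrictOrderedRing A]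
    (R : ι → ι → A) (η : ι → A) :
    coeffForm R η ≤ (∑ j, ∑ l, |R j l|) * ∑ j, η j ^ 2 := by
  simp only [coeffForm_apply, Finset.sum_mul _ _ (∑ j, η j ^ 2)]
  refine Finset.sum_le_sum fun j _ => Finset.sum_le_sum fun l _ => ?_
  calc R j l * η j * η l ≤ |R j l| * |η j * η l| := by
        rw [mul_assoc, ← abs_mul]; exact le_abs_self _
    _ ≤ |R j l| * ∑ j, η j ^ 2 := by gcongr; exact abs_mul_le_sum_sq η j l

theorem exists_forall_coeffForm_le {K : Type*} [TopologicalSpace K] [CompactSpace K]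
    {R : K → ι → ι → ℝ} (hR : ∀ j l, Continuous fun z => R z j l) :
    ∃ Λ, ∀ z η, coeffForm (R z) η ≤ Λ * ∑ j, η j ^ 2 := by
  have hcont : Continuous fun z => ∑ j, ∑ l, |R z j l| := by fun_prop
  obtain ⟨Λ, hΛ⟩ := (isCompact_range hcont).bddAbove
  refine ⟨Λ, fun z η => (coeffForm_le_sum_abs_mul (R z) η).trans ?_⟩
  gcongr
  exact hΛ (Set.mem_range_self z)

end CoeffForm

section DoubleRoot

variable {n : ℕ} (R : Fin n → Fin n → ℝ) (k : ℕ) (σ : ℝ) (ξ : Fin n → ℝ) (tσ : ℝ) (tξ : Fin n → ℝ)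

theorem mhat_eq : mhat R k σ ξ tσ tξ =
    (coeffForm R ξ - coeffForm R tξ - 2 * (-1) ^ k * σ * tσ : ℝ) +
      (polar (coeffForm R) ξ tξ + (-1) ^ k * (σ ^ 2 - tσ ^ 2) : ℝ) * Complex.I := by
  have hform : ∑ j, ∑ l, (R j l : ℂ) * (ξ j + Complex.I * tξ j) * (ξ l + Complex.I * tξ l) =
      (coeffForm R ξ - coeffForm R tξ : ℝ) + (polar (coeffForm R) ξ tξ : ℝ) * Complex.I := by
    rw [polar_coeffForm, coeffForm_apply, coeffForm_apply]
    push_cast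
    simp only [Finset.sum_mul, ← Finset.sum_add_distrib, ← Finset.sum_sub_distrib]
    refine Finset.sum_congr rfl fun j _ => Finset.sum_congr rfl fun l _ => ?_
    linear_combination (R j l : ℂ) * tξ j * tξ l * Complex.I_sq
  rw [mhat, hform]
  push_cast
  linear_combination (-1 : ℂ) ^ k * (2 * σ * tσ + Complex.I * tσ ^ 2) * Complex.I_sq

theorem mhat_re : (mhat R k σ ξ tσ tξ).re =
    coeffForm R ξ - coeffForm R tξ - 2 * (-1) ^ k * σ * tσ := by
  rw [mhat_eq, ← Complex.mk_eq_add_mul_I]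

theorem mhat_im : (mhat R k σ ξ tσ tξ).im =
    polar (coeffForm R) ξ tξ + (-1) ^ k * (σ ^ 2 - tσ ^ 2) := by
  rw [mhat_eq, ← Complex.mk_eq_add_mul_I]

theorem mhat_swap : mhat R (k + 1) tσ tξ σ ξ = -conj (mhat R k σ ξ tσ tξ) := by
  apply Complex.ext
  · rw [Complex.neg_re, Complex.conj_re, mhat_re, mhat_re]
    ring
  · rw [Complex.neg_im, Complex.conj_im, mhat_im, mhat_im, polar_comm]
    ring

variable {R k σ ξ tσ tξ}

theorem mhat_swap_eq_zero (h : mhat R k σ ξ tσ tξ = 0) : mhat R (k + 1) tσ tξ σ ξ = 0 := by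
  rw [mhat_swap, h, map_zero, neg_zero]

theorem coeffForm_add_sq_le_of_mhat_eq_zero (hR : ∀ η, 0 ≤ coeffForm R η)
    (h : mhat R k σ ξ tσ tξ = 0) :
    coeffForm R ξ + σ ^ 2 ≤ 6 * (coeffForm R tξ + tσ ^ 2) := by
  have hre := mhat_re R k σ ξ tσ tξ
  have him := mhat_im R k σ ξ tσ tξ
  rw [h, Complex.zero_re] at hre
  rw [h, Complex.zero_im] at him
  have hsign : ((-1 : ℝ) ^ k) ^ 2 = 1 := by rw [pow_right_comm, neg_one_sq, one_pow]
  exact add_sq_le_six_mul_add_sq (coeffForm R) hR hsign (by linarith) (by linarith)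

theorem sqrt_sq_add_sum_sq_le_of_mhat_eq_zero {c Λ : ℝ} (hc : 0 < c)
    (hlower : ∀ η, c * ∑ j, η j ^ 2 ≤ coeffForm R η)
    (hupper : ∀ η, coeffForm R η ≤ Λ * ∑ j, η j ^ 2)
    (h : mhat R k σ ξ tσ tξ = 0) :
    √(σ ^ 2 + ∑ j, ξ j ^ 2) ≤
      √(6 * max 1 Λ / min 1 c) * √(tσ ^ 2 + ∑ j, tξ j ^ 2) := by
  have hmin : 0 < min 1 c := lt_min one_pos hc
  have hnonneg (η : Fin n → ℝ) : 0 ≤ coeffForm R η := le_trans (by positivity) (hlower η)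
  have hcompare : min 1 c * (σ ^ 2 + ∑ j, ξ j ^ 2) ≤
      6 * max 1 Λ * (tσ ^ 2 + ∑ j, tξ j ^ 2) := by
    calc min 1 c * (σ ^ 2 + ∑ j, ξ j ^ 2)
        = min 1 c * ∑ j, ξ j ^ 2 + min 1 c * σ ^ 2 := by ring
      _ ≤ c * ∑ j, ξ j ^ 2 + 1 * σ ^ 2 := by
        gcongr
        exacts [min_le_right 1 c, min_le_left 1 c]
      _ ≤ coeffForm R ξ + σ ^ 2 := by linarith [hlower ξ]
      _ ≤ 6 * (coeffForm R tξ + tσ ^ 2) := coeffForm_add_sq_le_of_mhat_eq_zero hnonneg h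
      _ ≤ 6 * (Λ * ∑ j, tξ j ^ 2 + 1 * tσ ^ 2) := by linarith [hupper tξ]
      _ ≤ 6 * (max 1 Λ * ∑ j, tξ j ^ 2 + max 1 Λ * tσ ^ 2) := by
        gcongr
        exacts [le_max_right 1 Λ, le_max_left 1 Λ]
      _ = 6 * max 1 Λ * (tσ ^ 2 + ∑ j, tξ j ^ 2) := by ring
  rw [← Real.sqrt_mul (by positivity), div_mul_eq_mul_div]
  exact Real.sqrt_le_sqrt ((le_div_iff₀' hmin).2 hcompare)

end DoubleRoot

theorem stmt10_general (n : ℕ) (K : Type*) [TopologicalSpace K] [CompactSpace K]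
    (R : K → Fin n → Fin n → ℝ)
    (hRcont : ∀ j l, Continuous fun z => R z j l)
    (c : ℝ) (hc : 0 < c)
    (hpd : ∀ (z : K) (η : Fin n → ℝ), c * (∑ j, (η j) ^ 2) ≤ ∑ j, ∑ l, R z j l * η j * η l) :
    ∃ C > 0, ∀ (k : ℕ) (z : K) (σ : ℝ) (ξ : Fin n → ℝ) (tσ : ℝ) (tξ : Fin n → ℝ),
      mhat (R z) k σ ξ tσ tξ = 0 →
      Real.sqrt (tσ ^ 2 + ∑ j, (tξ j) ^ 2) / C ≤ Real.sqrt (σ ^ 2 + ∑ j, (ξ j) ^ 2) ∧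
      Real.sqrt (σ ^ 2 + ∑ j, (ξ j) ^ 2) ≤ C * Real.sqrt (tσ ^ 2 + ∑ j, (tξ j) ^ 2) := by
  simp only [← coeffForm_apply] at hpd
  obtain ⟨Λ, hΛ⟩ := exists_forall_coeffForm_le hRcont
  have hC : 0 < √(6 * max 1 Λ / min 1 c) := by positivity
  refine ⟨_, hC, fun k z σ ξ tσ tξ h => ⟨?_, ?_⟩⟩
  · exact (div_le_iff₀' hC).2
      (sqrt_sq_add_sum_sq_le_of_mhat_eq_zero hc (hpd z) (hΛ z) (mhat_swap_eq_zero h))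
  · exact sqrt_sq_add_sum_sq_le_of_mhat_eq_zero hc (hpd z) (hΛ z) h

/-- At a double root, i.e. when `m̂_k = 0`, one has `|t̂'|/C ≤ |ζ'| ≤ C |t̂'|`. -/
theorem stmt10 (n : ℕ) (K : Type*) [MetricSpace K] [CompactSpace K]
    (R : K → Fin n → Fin n → ℝ)
    (hRcont : ∀ j l, Continuous fun z => R z j l)
    (c : ℝ) (hc : 0 < c)
    (hpd : ∀ (z : K) (η : Fin n → ℝ), c * (∑ j, (η j) ^ 2) ≤ ∑ j, ∑ l, R z j l * η j * η l) :
    ∃ C > 0, ∀ k : ℕ, k = 1 ∨ k = 2 →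
      ∀ (z : K) (σ : ℝ) (ξ : Fin n → ℝ) (tσ : ℝ) (tξ : Fin n → ℝ),
        mhat (R z) k σ ξ tσ tξ = 0 →
        Real.sqrt (tσ ^ 2 + ∑ j, (tξ j) ^ 2) / C ≤ Real.sqrt (σ ^ 2 + ∑ j, (ξ j) ^ 2) ∧
        Real.sqrt (σ ^ 2 + ∑ j, (ξ j) ^ 2) ≤ C * Real.sqrt (tσ ^ 2 + ∑ j, (tξ j) ^ 2) := by
  obtain ⟨C, hC, hbound⟩ := stmt10_general n K R hRcont c hc hpd
  exact ⟨C, hC, fun k _ => hbound k⟩
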